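/- There exist ε* > 0 and a constant C̃ > 0, independent of ε, such that for all ε ∈ (0, ε*) and all s ∈ [k*, 1], | ε u_ε'(s) − √( (2 β_ε(s)/α_ε(s)) (F(u_ε(s)) − F(θ₀)) ) | ≤ C̃ ε^{1/2}. -/

import Mathlib

open Filter Set MeasureTheory

noncomputable section

/-- `g` is locally `τ`-Hölder continuous on `S`. -/
def LocHolderOn (τ : ℝ) (g : ℝ → ℝ) (S : Set ℝ) : Prop :=
  ∀ K : Set ℝ, K ⊆ S → IsCompact K →
    ∃ C : ℝ, ∀ x ∈ K, ∀ y ∈ K, |g x - g y| ≤ C * |x - y| ^ τ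

/-- Assumption (A1): `f ∈ C^{1,τ}_loc`, `inf f' > 0`, `f θ₀ = 0`. -/
def A1 (τ θ₀ : ℝ) (f : ℝ → ℝ) : Prop :=
  ContDiff ℝ 1 f ∧ LocHolderOn τ (deriv f) Set.univ ∧
    (∃ c > 0, ∀ t : ℝ, c ≤ deriv f t) ∧ f θ₀ = 0

/-- Assumption (A2): `e ∈ C^{1,τ}_loc`, decreasing and strictly positive. -/
def A2 (τ : ℝ) (e : ℝ → ℝ) : Prop :=
  ContDiff ℝ 1 e ∧ LocHolderOn τ (deriv e) Set.univ ∧ Antitone e ∧ ∀ t : ℝ, 0 < e t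

/-- Assumption (A3) for the coefficient pair `(a, b)`, with parameter `kstar ∈ (0,1)`. -/
def A3 (N : ℕ) (τ kstar : ℝ) (a b : ℝ → ℝ) : Prop :=
  ContDiff ℝ 2 a ∧ ContDiff ℝ 1 b ∧
  LocHolderOn τ (deriv (deriv a)) (Set.Ici 0) ∧ LocHolderOn τ (deriv b) (Set.Ici 0) ∧
  (∃ M : ℝ, ∀ r : ℝ, 0 ≤ r → a r ≤ M ∧ b r ≤ M) ∧
  (∃ c > 0, ∀ r : ℝ, 0 ≤ r → c ≤ a r ∧ c ≤ b r) ∧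
  MonotoneOn (fun r : ℝ => r ^ (N - 1) * b r) (Set.Ioi 0) ∧
  kstar ∈ Set.Ioo (0:ℝ) 1 ∧
  (∃ L > 0, Tendsto
    (fun R : ℝ => sSup ((fun r : ℝ =>
      R * (|deriv a r| + |deriv b r|) + R ^ 2 * |deriv (deriv a) r|) '' Set.Ico (kstar * R) R))
    atTop (nhds L))

/-- `U`, with derivative `U'`, is a solution of
`(r^{N-1} a U')' = r^{N-1} b f(U)` on `(0,R)`, `r^{N-1} a U' → 0` as `r → 0⁺`,
`U'(R) = e(U(R))`, of class `C¹((0,R]) ∩ C^∞((0,R))`, continuous up to `[0,R]`. -/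
def IsSol (N : ℕ) (f e a b : ℝ → ℝ) (R : ℝ) (U U' : ℝ → ℝ) : Prop :=
  ContinuousOn U (Set.Icc 0 R) ∧
  (∀ r ∈ Set.Ioc (0:ℝ) R, HasDerivWithinAt U (U' r) (Set.Icc 0 R) r) ∧
  ContinuousOn U' (Set.Ioc 0 R) ∧
  ContDiffOn ℝ (⊤ : ℕ∞) U (Set.Ioo 0 R) ∧
  (∀ r ∈ Set.Ioo (0:ℝ) R,
    HasDerivAt (fun s : ℝ => s ^ (N - 1) * a s * U' s) (r ^ (N - 1) * b r * f (U r)) r) ∧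
  Tendsto (fun r : ℝ => r ^ (N - 1) * a r * U' r) (nhdsWithin 0 (Set.Ioi 0)) (nhds 0) ∧
  U' R = e (U R)

/-- The primitive `F(t) = ∫₀ᵗ f(s) ds`. -/
def Fo (f : ℝ → ℝ) (t : ℝ) : ℝ := ∫ s in (0:ℝ)..t, f s

/-- `u`, with derivative `u'`, is a solution of the rescaled singularly perturbed problem
`ε² (u'' + ((N−1)/s + α_ε'/α_ε) u') = (β_ε/α_ε) f(u)` on `(0,1)`, `u'(0) = 0`,
`ε u'(1) = e(u(1))`, where `α_ε(s) = a(s/ε)`, `β_ε(s) = b(s/ε)`; it also records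
the facts `u ≥ θ₀` and `u' ≥ 0` on `[0,1]`. -/
def IsSolE (N : ℕ) (f e a b : ℝ → ℝ) (θ₀ ε : ℝ) (u u' : ℝ → ℝ) : Prop :=
  ContinuousOn u (Set.Icc 0 1) ∧
  (∀ s ∈ Set.Ioc (0:ℝ) 1, HasDerivWithinAt u (u' s) (Set.Icc 0 1) s) ∧
  ContinuousOn u' (Set.Ioc 0 1) ∧
  ContDiffOn ℝ (⊤ : ℕ∞) u (Set.Ioo 0 1) ∧
  (∀ s ∈ Set.Ioo (0:ℝ) 1, ∃ d : ℝ, HasDerivAt u' d s ∧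
    ε ^ 2 * (d + (((N:ℝ) - 1) / s + deriv (fun t : ℝ => a (t / ε)) s / a (s / ε)) * u' s)
      = b (s / ε) / a (s / ε) * f (u s)) ∧
  u' 0 = 0 ∧
  ε * u' 1 = e (u 1) ∧
  (∀ s ∈ Set.Icc (0:ℝ) 1, θ₀ ≤ u s ∧ 0 ≤ u' s)

lemma mono_aux {k l : ℝ} {g g' : ℝ → ℝ} (hc : ContinuousOn g (Icc k l))
    (hd : ∀ x ∈ Ioo k l, HasDerivAt g (g' x) x) (h0 : ∀ x ∈ Ioo k l, 0 ≤ g' x) :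
    MonotoneOn g (Icc k l) := by
  apply monotoneOn_of_deriv_nonneg (convex_Icc k l) hc
  · intro x hx
    rw [interior_Icc] at hx
    exact (hd x hx).differentiableAt.differentiableWithinAt
  · intro x hx
    rw [interior_Icc] at hx
    rw [(hd x hx).deriv]; exact h0 x hx

lemma flux_bound (m : ℕ) {k c M e0 ε : ℝ} {α u' : ℝ → ℝ}
    (hk : 0 < k) (hk1 : k < 1) (hc : 0 < c) (hε : 0 < ε)
    (hα : ∀ s ∈ Icc k 1, c ≤ α s ∧ α s ≤ M)
    (hu'0 : ∀ s ∈ Icc k 1, 0 ≤ u' s) (hu'1 : ε * u' 1 ≤ e0)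
    (hwmono : MonotoneOn (fun s => s ^ (m+1) * α s * u' s) (Icc k 1)) :
    ∀ s ∈ Icc k 1, ε * u' s ≤ M * e0 / (k ^ (m+1) * c) := by
  intro s hs
  have h1 : (1:ℝ) ∈ Icc k 1 := ⟨hk1.le, le_rfl⟩
  have hw := hwmono hs h1 hs.2
  simp only [one_pow, one_mul] at hw
  have hκ : 0 < k ^ (m+1) := by positivity
  rw [le_div_iff₀ (by positivity)]
  have h2 : k ^ (m+1) * c ≤ s ^ (m+1) * α s :=
    mul_le_mul (pow_le_pow_left₀ hk.le hs.1 _) (hα s hs).1 hc.le (pow_nonneg (hk.le.trans hs.1) _)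
  have h3 := mul_le_mul_of_nonneg_right h2 (hu'0 s hs)
  have h4 : α 1 * u' 1 ≤ M * u' 1 := mul_le_mul_of_nonneg_right (hα 1 h1).2 (hu'0 1 h1)
  have hM : 0 ≤ M := hc.le.trans ((hα 1 h1).1.trans (hα 1 h1).2)
  have h5 := mul_le_mul_of_nonneg_left hu'1 hM
  have h6 := mul_le_mul_of_nonneg_left (h3.trans (hw.trans h4)) hε.le
  nlinarith

set_option maxHeartbeats 1000000 in
lemma core (m : ℕ) {k c M D e0 cf ε θ : ℝ} {f G α α' β β' u u' u'' : ℝ → ℝ}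
    (hk : 0 < k) (hk1 : k < 1) (hc : 0 < c) (hε : 0 < ε) (hε1 : ε < 1 - k) (hcf : 0 < cf)
    (he0 : 0 ≤ e0) (hD : 0 ≤ D)
    (hfm : Monotone f) (hf : ∀ t, θ ≤ t → cf * (t - θ) ≤ f t)
    (hG : ∀ t, HasDerivAt G (f t) t)
    (hG0 : ∀ t, θ ≤ t → 0 ≤ G t ∧ G t ≤ f t * (t - θ))
    (hα : ∀ s ∈ Icc k 1, c ≤ α s ∧ α s ≤ M) (hβ : ∀ s ∈ Icc k 1, c ≤ β s ∧ β s ≤ M)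
    (hαc : ContinuousOn α (Icc k 1)) (hβc : ContinuousOn β (Icc k 1))
    (huc : ContinuousOn u (Icc k 1)) (huc' : ContinuousOn u' (Icc k 1))
    (hαd : ∀ s ∈ Ioo k 1, HasDerivAt α (α' s) s) (hβd : ∀ s ∈ Ioo k 1, HasDerivAt β (β' s) s)
    (hD' : ∀ s ∈ Ioo k 1, |α' s| + |β' s| ≤ D)
    (hud : ∀ s ∈ Ioo k 1, HasDerivAt u (u' s) s) (hud' : ∀ s ∈ Ioo k 1, HasDerivAt u' (u'' s) s)
    (hode : ∀ s ∈ Ioo k 1, ε ^ 2 * (u'' s + (((m:ℝ) + 1) / s + α' s / α s) * u' s)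
      = β s / α s * f (u s))
    (hθ : ∀ s ∈ Icc k 1, θ ≤ u s) (hu'0 : ∀ s ∈ Icc k 1, 0 ≤ u' s) (hu'1 : ε * u' 1 ≤ e0)
    {C1 K C2 H : ℝ} (hC1 : C1 = M * e0 / (k ^ (m+1) * c)) 
    (hK : K = C1 + C1 / cf) (hC2 : C2 = C1 * K + K * C1)
    (hH : H = ((m:ℝ) + 1) / k + D / c + M * D / c ^ 2) :
    ∀ s ∈ Icc k 1, |(ε * u' s) ^ 2 / 2 - β s / α s * G (u s)| ≤
      ((1 + M / c) * (C2 / (1 - k)) + H * C2) * ε := by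
  have h1 : (1:ℝ) ∈ Icc k 1 := ⟨hk1.le, le_rfl⟩
  have hkm : k ∈ Icc k 1 := ⟨le_rfl, hk1.le⟩
  have hM : 0 < M := hc.trans_le ((hα 1 h1).1.trans (hα 1 h1).2)
  have hκ : 0 < k ^ (m+1) := by positivity
  have hIoo : ∀ s ∈ Ioo k 1, s ∈ Icc k 1 := fun s hs => ⟨hs.1.le, hs.2.le⟩
  have hC10 : 0 ≤ C1 := by rw [hC1]; positivity
  have hK0 : 0 ≤ K := by rw [hK]; positivity
  have hf0 : ∀ t, θ ≤ t → 0 ≤ f t := fun t ht =>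
    (mul_nonneg hcf.le (sub_nonneg.2 ht)).trans (hf t ht)
  -- flux
  set w : ℝ → ℝ := fun s => s ^ (m+1) * α s * u' s with hw
  have hwc : ContinuousOn w (Icc k 1) := ((continuousOn_id.pow _).mul hαc).mul huc'
  have hwd : ∀ s ∈ Ioo k 1, HasDerivAt w (s ^ (m+1) * β s * f (u s) / ε ^ 2) s := by
    intro s hs
    have hs0 : 0 < s := hk.trans hs.1
    have hαs : 0 < α s := hc.trans_le (hα s (hIoo s hs)).1
    have := (((hasDerivAt_pow (m+1) s).mul (hαd s hs)).mul (hud' s hs))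
    refine HasDerivAt.congr_deriv this ?_
    have ho := hode s hs
    have hp : s ^ (m+1) = s ^ m * s := pow_succ _ _
    simp only [Nat.add_sub_cancel, Pi.mul_apply, hp]
    push_cast
    rw [eq_div_iff (by positivity)]
    field_simp at ho
    linear_combination (s ^ m) * ho
  have hw'0 : ∀ s ∈ Ioo k 1, 0 ≤ s ^ (m+1) * β s * f (u s) / ε ^ 2 := by
    intro s hs
    have hs0 : 0 < s := hk.trans hs.1
    have hβs : 0 < β s := hc.trans_le (hβ s (hIoo s hs)).1
    have := hf0 _ (hθ s (hIoo s hs))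
    positivity
  have hwm : MonotoneOn w (Icc k 1) := mono_aux hwc hwd hw'0
  have hv : ∀ s ∈ Icc k 1, ε * u' s ≤ C1 := by
    rw [hC1]
    exact flux_bound m hk hk1 hc hε hα hu'0 hu'1 hwm
  have hum : MonotoneOn u (Icc k 1) := mono_aux huc hud fun s hs => hu'0 s (hIoo s hs)
  have hw0 : ∀ s ∈ Icc k 1, 0 ≤ w s := by
    intro s hs
    have hs0 : 0 < s := hk.trans_le hs.1
    have hαs : 0 < α s := hc.trans_le (hα s hs).1
    have := hu'0 s hs
    simp only [hw]; positivity
  have hw1 : ε * w 1 ≤ M * e0 := by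
    simp only [hw, one_pow, one_mul]
    have := mul_le_mul (hα 1 h1).2 hu'1 (mul_nonneg hε.le (hu'0 1 h1)) hM.le
    linarith
  have hMe : M * e0 = C1 * (k ^ (m+1) * c) := by rw [hC1]; field_simp
  have hpow : ∀ s ∈ Icc k 1, k ^ (m+1) * c ≤ s ^ (m+1) * β s := fun s hs =>
    mul_le_mul (pow_le_pow_left₀ hk.le hs.1 _) (hβ s hs).1 hc.le (pow_nonneg (hk.le.trans hs.1) _)
  -- bound on u 1
  have hu1 : u 1 - θ ≤ K := by
    have hl : k < 1 - ε := by linarith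
    have hl1 : 1 - ε < 1 := by linarith
    have hlm : 1 - ε ∈ Icc k 1 := ⟨hl.le, hl1.le⟩
    have hsub : Icc (1 - ε) 1 ⊆ Icc k 1 := Icc_subset_Icc_left hl.le
    have hsub' : Ioo (1 - ε) 1 ⊆ Ioo k 1 := Ioo_subset_Ioo_left hl.le
    obtain ⟨x, hx, hx'⟩ := exists_hasDerivAt_eq_slope u u' hl1 (huc.mono hsub)
      (fun s hs => hud s (hsub' hs))
    obtain ⟨y, hy, hy'⟩ := exists_hasDerivAt_eq_slope w _ hl1 (hwc.mono hsub)
      (fun s hs => hwd s (hsub' hs))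
    have e1 : (1:ℝ) - (1 - ε) = ε := by ring
    rw [e1] at hx' hy'
    have hx2 : u 1 - u (1 - ε) ≤ C1 := by
      have := hv x (hIoo _ (hsub' hx))
      rw [hx'] at this
      field_simp at this
      exact this
    have hy2 : y ^ (m+1) * β y * f (u y) = ε * (w 1 - w (1 - ε)) := by
      field_simp at hy'
      linarith
    have hyI := hIoo _ (hsub' hy)
    have a1 : cf * (u (1-ε) - θ) ≤ f (u y) :=
      (hf _ (hθ _ hlm)).trans (hfm (hum hlm hyI hy.1.le))
    have a2 : (k ^ (m+1) * c) * f (u y) ≤ (k ^ (m+1) * c) * C1 := by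
      calc _ ≤ y ^ (m+1) * β y * f (u y) := 
            mul_le_mul_of_nonneg_right (hpow y hyI) (hf0 _ (hθ _ hyI))
        _ = ε * (w 1 - w (1 - ε)) := hy2
        _ ≤ ε * w 1 := mul_le_mul_of_nonneg_left (by linarith [hw0 _ hlm]) hε.le
        _ ≤ _ := by rw [mul_comm _ C1, ← hMe]; exact hw1
    have a3 : f (u y) ≤ C1 := le_of_mul_le_mul_left a2 (by positivity)
    have a4 : u (1 - ε) - θ ≤ C1 / cf := by
      rw [le_div_iff₀ hcf]; linarith
    rw [hK]; linarith
  -- energy and majorant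
  set P : ℝ → ℝ := fun s => C1 * ε * u s + K / (k ^ (m+1) * c) * ε ^ 2 * w s with hP
  set P' : ℝ → ℝ := fun s => C1 * ε * u' s +
    K / (k ^ (m+1) * c) * ε ^ 2 * (s ^ (m+1) * β s * f (u s) / ε ^ 2) with hP'
  have hPc : ContinuousOn P (Icc k 1) := 
    (continuousOn_const.mul huc).add (continuousOn_const.mul hwc)
  have hPd : ∀ s ∈ Ioo k 1, HasDerivAt P (P' s) s := fun s hs =>
    ((hud s hs).const_mul _).add ((hwd s hs).const_mul _)
  have hGu : ∀ s ∈ Icc k 1, 0 ≤ G (u s) ∧ G (u s) ≤ K * f (u s) := by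
    intro s hs
    refine ⟨(hG0 _ (hθ s hs)).1, (hG0 _ (hθ s hs)).2.trans ?_⟩
    rw [mul_comm]
    exact mul_le_mul_of_nonneg_right (by linarith [hum hs h1 hs.2]) (hf0 _ (hθ s hs))
  have hP'0 : ∀ s ∈ Ioo k 1, (ε * u' s) ^ 2 + G (u s) ≤ P' s := by
    intro s hs
    have hs' := hIoo s hs
    have b1 : (ε * u' s) ^ 2 ≤ C1 * ε * u' s := by
      have := mul_le_mul_of_nonneg_right (hv s hs') (mul_nonneg hε.le (hu'0 s hs'))
      nlinarith
    have b2 : K * f (u s) ≤ 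
        K / (k ^ (m+1) * c) * ε ^ 2 * (s ^ (m+1) * β s * f (u s) / ε ^ 2) := by
      have := mul_le_mul_of_nonneg_right (hpow s hs') 
        (mul_nonneg hK0 (hf0 _ (hθ s hs')))
      have e2 : K / (k ^ (m+1) * c) * ε ^ 2 * (s ^ (m+1) * β s * f (u s) / ε ^ 2) =
        (s ^ (m+1) * β s * (K * f (u s))) / (k ^ (m+1) * c) := by field_simp
      rw [e2, le_div_iff₀ (by positivity)]
      linarith
    simp only [hP']
    linarith [(hGu s hs').2]
  have hPdiff : P 1 - P k ≤ C2 * ε := by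
    have c1 : u 1 - u k ≤ K := by linarith [hθ k hkm]
    have c2 : C1 * ε * (u 1 - u k) ≤ C1 * ε * K := mul_le_mul_of_nonneg_left c1 (by positivity)
    have c3 : ε * (w 1 - w k) ≤ C1 * (k ^ (m+1) * c) := by
      rw [← hMe]; nlinarith [hw0 k hkm]
    have c4 : K / (k ^ (m+1) * c) * ε * (ε * (w 1 - w k)) ≤ 
        K / (k ^ (m+1) * c) * ε * (C1 * (k ^ (m+1) * c)) := 
      mul_le_mul_of_nonneg_left c3 (by positivity)
    have c5 : K / (k ^ (m+1) * c) * ε * (C1 * (k ^ (m+1) * c)) = K * C1 * ε := by field_simp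
    rw [c5] at c4
    simp only [hP]
    rw [hC2]
    linarith
  set E : ℝ → ℝ := fun s => (ε * u' s) ^ 2 / 2 - β s / α s * G (u s) with hE
  have hαne : ∀ s ∈ Icc k 1, α s ≠ 0 := fun s hs => (hc.trans_le (hα s hs).1).ne'
  have hGc : Continuous G := continuous_iff_continuousAt.2 fun t => (hG t).continuousAt
  have hEc : ContinuousOn E (Icc k 1) :=
    (((continuousOn_const.mul huc').pow 2).div_const 2).sub
      ((hβc.div hαc hαne).mul (hGc.comp_continuousOn huc))
  set E' : ℝ → ℝ := fun s => - ((((m:ℝ) + 1) / s + α' s / α s) * (ε * u' s) ^ 2) -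
    (β' s * α s - β s * α' s) / α s ^ 2 * G (u s) with hE'
  have hEd : ∀ s ∈ Ioo k 1, HasDerivAt E (E' s) s := by
    intro s hs
    have hs0 : 0 < s := hk.trans hs.1
    have hne := hαne s (hIoo s hs)
    have := ((((hud' s hs).const_mul ε).pow 2).div_const 2).sub
      (((hβd s hs).div (hαd s hs) hne).mul ((hG (u s)).comp s (hud s hs)))
    refine HasDerivAt.congr_deriv this ?_
    have ho := hode s hs
    simp only [hE', Pi.div_apply]
    norm_num
    linear_combination (u' s) * ho
  have hE'b : ∀ s ∈ Ioo k 1, |E' s| ≤ H * P' s := by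
    intro s hs
    have hs' := hIoo s hs
    have hs0 : 0 < s := hk.trans hs.1
    obtain ⟨hαl, hαu⟩ := hα s hs'
    obtain ⟨hβl, hβu⟩ := hβ s hs'
    have hα0 : 0 < α s := hc.trans_le hαl
    have hβ0 : 0 < β s := hc.trans_le hβl
    have hd := hD' s hs
    have n1 := abs_nonneg (α' s)
    have n2 := abs_nonneg (β' s)
    have d1 : |((m:ℝ) + 1) / s + α' s / α s| ≤ ((m:ℝ) + 1) / k + D / c := by
      refine (abs_add_le _ _).trans (add_le_add ?_ ?_)
      · rw [abs_of_nonneg (by positivity)]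
        exact div_le_div_of_nonneg_left (by positivity) hk hs.1.le
      · rw [abs_div, abs_of_pos hα0]
        exact div_le_div₀ hD (by linarith) hc hαl
    have d2 : |(β' s * α s - β s * α' s) / α s ^ 2| ≤ M * D / c ^ 2 := by
      rw [abs_div, abs_of_pos (pow_pos hα0 2)]
      refine div_le_div₀ (by positivity) ?_ (by positivity) (pow_le_pow_left₀ hc.le hαl 2)
      refine (abs_sub _ _).trans ?_
      rw [abs_mul, abs_mul, abs_of_pos hα0, abs_of_pos hβ0]
      nlinarith
    have g0 := (hGu s hs').1
    have q0 := sq_nonneg (ε * u' s)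
    have x1 : 0 ≤ ((m:ℝ) + 1) / k + D / c := by positivity
    have x2 : 0 ≤ M * D / c ^ 2 := by positivity
    calc |E' s| ≤ |((m:ℝ) + 1) / s + α' s / α s| * (ε * u' s) ^ 2 
          + |(β' s * α s - β s * α' s) / α s ^ 2| * G (u s) := by
          simp only [hE']
          refine (abs_sub _ _).trans ?_
          rw [abs_neg, abs_mul, abs_mul _ (G (u s)), abs_of_nonneg g0, abs_of_nonneg q0]
      _ ≤ (((m:ℝ) + 1) / k + D / c) * (ε * u' s) ^ 2 + M * D / c ^ 2 * G (u s) := by gcongr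
      _ ≤ H * ((ε * u' s) ^ 2 + G (u s)) := by
          have w1 := mul_nonneg x1 g0
          have w2 := mul_nonneg x2 q0
          rw [hH]; linarith
      _ ≤ H * P' s := mul_le_mul_of_nonneg_left (hP'0 s hs) (by rw [hH]; positivity)
  have hH0 : 0 ≤ H := by rw [hH]; positivity
  have m1 : MonotoneOn (fun s => H * P s - E s) (Icc k 1) :=
    mono_aux ((continuousOn_const.mul hPc).sub hEc)
      (fun s hs => ((hPd s hs).const_mul H).sub (hEd s hs))
      (fun s hs => by linarith [(abs_le.1 (hE'b s hs)).2])
  have m2 : MonotoneOn (fun s => H * P s + E s) (Icc k 1) :=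
    mono_aux ((continuousOn_const.mul hPc).add hEc)
      (fun s hs => ((hPd s hs).const_mul H).add (hEd s hs))
      (fun s hs => by linarith [(abs_le.1 (hE'b s hs)).1])
  have mP : MonotoneOn P (Icc k 1) := mono_aux hPc hPd fun s hs =>
    (add_nonneg (sq_nonneg _) (hGu s (hIoo s hs)).1).trans (hP'0 s hs)
  obtain ⟨x, hx, hx'⟩ := exists_hasDerivAt_eq_slope P P' hk1 hPc hPd
  have hxI := hIoo x hx
  have hk1' : 0 < 1 - k := by linarith
  have hEx : |E x| ≤ (1 + M / c) * (C2 / (1 - k)) * ε := by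
    have y1 : P' x ≤ C2 / (1 - k) * ε := by
      rw [hx', div_mul_eq_mul_div]; gcongr
    have g0 := (hGu x hxI).1
    have q0 := sq_nonneg (ε * u' x)
    have hα0 : 0 < α x := hc.trans_le (hα x hxI).1
    have hβ0 : 0 < β x := hc.trans_le (hβ x hxI).1
    have y2 : β x / α x ≤ M / c := div_le_div₀ hM.le (hβ x hxI).2 hc (hα x hxI).1
    have y4 : 0 ≤ M / c := by positivity
    have y5 : 0 ≤ β x / α x := by positivity
    have y3 : |E x| ≤ (1 + M / c) * ((ε * u' x) ^ 2 + G (u x)) := by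
      simp only [hE]
      refine (abs_sub _ _).trans ?_
      rw [abs_mul, abs_of_nonneg y5, abs_of_nonneg g0, abs_of_nonneg (by positivity)]
      nlinarith [mul_le_mul_of_nonneg_right y2 g0, mul_nonneg y4 q0]
    calc _ ≤ _ := y3
      _ ≤ (1 + M / c) * (C2 / (1 - k) * ε) := by
        gcongr
        exact (hP'0 x hx).trans y1
      _ = _ := by ring
  intro s hs
  have key : |E s - E x| ≤ H * (P 1 - P k) := by
    have p1 := mP hs h1 hs.2
    have p2 := mP hkm hs hs.1
    have p3 := mP hxI h1 hxI.2
    have p4 := mP hkm hxI hxI.1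
    have z1 : H * (P s - P x) ≤ H * (P 1 - P k) := mul_le_mul_of_nonneg_left (by linarith) hH0
    have z2 : H * (P x - P s) ≤ H * (P 1 - P k) := mul_le_mul_of_nonneg_left (by linarith) hH0
    rw [abs_le]
    rcases le_total s x with h | h
    · have i1 := m1 hs hxI h
      have i2 := m2 hs hxI h
      simp only at i1 i2
      constructor <;> linarith
    · have i1 := m1 hxI hs h
      have i2 := m2 hxI hs h
      simp only at i1 i2
      constructor <;> linarith
  have key2 := mul_le_mul_of_nonneg_left hPdiff hH0
  have := abs_sub_abs_le_abs_sub (E s) (E x)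
  change |E s| ≤ _
  linarith

lemma sqrt_aux {v y B : ℝ} (hv : 0 ≤ v) (hy : 0 ≤ y) (h : |v ^ 2 - y| ≤ B) :
    |v - Real.sqrt y| ≤ Real.sqrt B := by
  apply Real.le_sqrt_of_sq_le
  refine le_trans ?_ h
  have h1 := Real.sq_sqrt hy
  have h2 := Real.sqrt_nonneg y
  have h3 : v ^ 2 - y = (v - √y) * (v + √y) := by
    linear_combination h1
  rw [h3, abs_mul, sq |v - √y|]
  apply mul_le_mul_of_nonneg_left _ (abs_nonneg _)
  rw [abs_le, abs_of_nonneg (by positivity)]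
  constructor <;> linarith

lemma Fo_hasDeriv {f : ℝ → ℝ} (hf : Continuous f) (t : ℝ) : HasDerivAt (Fo f) (f t) t :=
  intervalIntegral.integral_hasDerivAt_right (hf.intervalIntegrable _ _)
    (hf.stronglyMeasurableAtFilter _ _) hf.continuousAt

/-- the first-order asymptotic ODE estimate
`|ε u_ε'(s) − √((2β_ε(s)/α_ε(s))(F(u_ε(s)) − F(θ₀)))| ≤ C̃ √ε` on `[k*, 1]`. -/
theorem stmt_17 (N : ℕ) (hN : 2 ≤ N) (τ θ₀ kstar : ℝ) (hτ : τ ∈ Set.Ioo (0:ℝ) 1)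
    (f e a b : ℝ → ℝ) (hf : A1 τ θ₀ f) (he : A2 τ e) (hab : A3 N τ kstar a b) :
    ∃ εs > 0, ∃ C > 0, ∀ ε : ℝ, ε ∈ Set.Ioo 0 εs → ∀ u u' : ℝ → ℝ,
      IsSolE N f e a b θ₀ ε u u' → ∀ s ∈ Set.Icc kstar 1,
        |ε * u' s - Real.sqrt (2 * b (s / ε) / a (s / ε) * (Fo f (u s) - Fo f θ₀))| ≤
          C * Real.sqrt ε := by
  obtain ⟨hf1, -, ⟨cf, hcf, hf'⟩, hfθ⟩ := hf
  obtain ⟨-, -, hea, hep⟩ := he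
  obtain ⟨ha, hb, -, -, ⟨M, hM⟩, ⟨c, hc, hcab⟩, -, ⟨hk, hk1⟩, L, hL, hlim⟩ := hab
  obtain ⟨m, rfl⟩ : ∃ m, N = m + 2 := ⟨N - 2, by omega⟩
  have hev := hlim.eventually (gt_mem_nhds (show L < L + 1 by linarith))
  obtain ⟨R0, hR0⟩ := eventually_atTop.1 hev
  have hfd : Differentiable ℝ f := hf1.differentiable (by norm_num)
  have had : Differentiable ℝ a := ha.differentiable (by norm_num)
  have hbd : Differentiable ℝ b := hb.differentiable (by norm_num)
  have hac1 : Continuous (deriv a) := ha.continuous_deriv (by norm_num)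
  have hbc1 : Continuous (deriv b) := hb.continuous_deriv (by norm_num)
  have hac2 : Continuous (deriv (deriv a)) := by
    have : ContDiff ℝ 1 (deriv a) := by
      have h2 : ContDiff ℝ (1 + 1) a := by norm_num; exact ha
      exact (contDiff_succ_iff_deriv.1 h2).2.2
    exact this.continuous_deriv (by norm_num)
  have hfm : Monotone f := monotone_of_deriv_nonneg hfd fun t => hcf.le.trans (hf' t)
  have hfl : ∀ t, θ₀ ≤ t → cf * (t - θ₀) ≤ f t := by
    intro t ht
    have hmono : Monotone (fun x => f x - cf * x) := by
      apply monotone_of_deriv_nonneg (hfd.sub (differentiable_id.const_mul cf))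
      intro x
      have := (hfd x).hasDerivAt.sub ((hasDerivAt_id x).const_mul cf)
      rw [this.deriv]; linarith [hf' x]
    have := hmono ht
    simp only [hfθ] at this
    linarith
  set G : ℝ → ℝ := fun t => Fo f t - Fo f θ₀ with hGdef
  have hG : ∀ t, HasDerivAt G (f t) t := fun t => (Fo_hasDeriv hfd.continuous t).sub_const _
  have hG0 : ∀ t, θ₀ ≤ t → 0 ≤ G t ∧ G t ≤ f t * (t - θ₀) := by
    intro t ht
    rcases ht.eq_or_lt with rfl | hlt
    · simp [hGdef]
    · obtain ⟨x, hx, hx'⟩ := exists_hasDerivAt_eq_slope G f hlt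
        (fun s _ => (hG s).continuousAt.continuousWithinAt) (fun s _ => hG s)
      have hpos : 0 < t - θ₀ := by linarith
      have hGθ : G θ₀ = 0 := by simp [hGdef]
      rw [hGθ, sub_zero, eq_div_iff hpos.ne'] at hx'
      have hfx : 0 ≤ f x := by rw [← hfθ]; exact hfm hx.1.le
      rw [← hx']
      exact ⟨by positivity, mul_le_mul_of_nonneg_right (hfm hx.2.le) hpos.le⟩
  obtain ⟨C1, hC1⟩ : ∃ C1, C1 = M * e θ₀ / (kstar ^ (m+1) * c) := ⟨_, rfl⟩
  obtain ⟨K, hK⟩ : ∃ K, K = C1 + C1 / cf := ⟨_, rfl⟩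
  obtain ⟨C2, hC2⟩ : ∃ C2, C2 = C1 * K + K * C1 := ⟨_, rfl⟩
  obtain ⟨H, hH⟩ : ∃ H, H = ((m:ℝ) + 1) / kstar + (L+1) / c + M * (L+1) / c ^ 2 := ⟨_, rfl⟩
  set C3 := (1 + M / c) * (C2 / (1 - kstar)) + H * C2 with hC3
  have hR1 : 0 < max R0 1 := by positivity
  refine ⟨min (1 / max R0 1) (1 - kstar), lt_min (by positivity) (by linarith),
    Real.sqrt (2 * C3) + 1, by positivity, ?_⟩
  rintro ε ⟨hε, hε1⟩ u u' ⟨huc, hud, huc', -, hode, -, hbc, hpos⟩ s hs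
  have hεR : max R0 1 < 1 / ε := by
    rw [lt_one_div hR1 hε]; exact hε1.trans_le (min_le_left _ _)
  have hε2 : ε < 1 - kstar := hε1.trans_le (min_le_right _ _)
  have hRR : R0 ≤ 1 / ε := (le_max_left _ _).trans hεR.le
  have hαd : ∀ s, HasDerivAt (fun t => a (t / ε)) (deriv a (s / ε) * (1 / ε)) s := fun s =>
    (had (s / ε)).hasDerivAt.comp s ((hasDerivAt_id s).div_const ε)
  have hβd : ∀ s, HasDerivAt (fun t => b (t / ε)) (deriv b (s / ε) * (1 / ε)) s := fun s =>
    (hbd (s / ε)).hasDerivAt.comp s ((hasDerivAt_id s).div_const ε)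
  have hD' : ∀ s ∈ Ioo kstar 1,
      |deriv a (s / ε) * (1 / ε)| + |deriv b (s / ε) * (1 / ε)| ≤ L + 1 := by
    intro s hs
    have hlt := hR0 (1 / ε) hRR
    set R := 1 / ε with hRdef
    have hRpos : 0 < R := by positivity
    set φ : ℝ → ℝ := fun r : ℝ =>
      R * (|deriv a r| + |deriv b r|) + R ^ 2 * |deriv (deriv a) r| with hφ
    have hφc : Continuous φ := by
      have := hac1.abs
      have := hbc1.abs
      have := hac2.abs
      fun_prop
    have hbdd : BddAbove (φ '' Ico (kstar * R) R) :=
      ((isCompact_Icc (a := kstar * R) (b := R)).bddAbove_image hφc.continuousOn).mono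
        (image_mono Ico_subset_Icc_self)
    have hmem : s / ε ∈ Ico (kstar * R) R := by
      have : s / ε = s * R := by rw [hRdef]; ring
      rw [this]
      exact ⟨mul_le_mul_of_nonneg_right hs.1.le hRpos.le, by nlinarith [hs.2]⟩
    have hle := le_csSup hbdd (mem_image_of_mem φ hmem)
    have h0 : 0 ≤ R ^ 2 * |deriv (deriv a) (s / ε)| := by positivity
    rw [abs_mul, abs_mul, abs_of_pos hRpos]
    simp only [hφ] at hle
    linarith
  have hsub : Icc kstar 1 ⊆ Ioc (0:ℝ) 1 := fun x hx => ⟨hk.trans_le hx.1, hx.2⟩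
  have hsub0 : Icc kstar 1 ⊆ Icc (0:ℝ) 1 := fun x hx => ⟨hk.le.trans hx.1, hx.2⟩
  have hsub1 : Ioo kstar 1 ⊆ Ioo (0:ℝ) 1 := fun x hx => ⟨hk.trans hx.1, hx.2⟩
  have hbnd : ∀ s ∈ Icc kstar 1, 0 ≤ s / ε := fun s hs => div_nonneg (hsub0 hs).1 hε.le
  have hode' : ∀ s, s ∈ Ioo (0:ℝ) 1 → HasDerivAt u' (deriv u' s) s ∧ 
      ε ^ 2 * (deriv u' s + (((m:ℝ) + 1) / s + (deriv a (s / ε) * (1 / ε)) / a (s / ε)) * u' s)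
      = b (s / ε) / a (s / ε) * f (u s) := by
    intro s hs
    obtain ⟨d, hd, hd'⟩ := hode s hs
    rw [(hαd s).deriv] at hd'
    rw [hd.deriv]
    refine ⟨hd, ?_⟩
    rw [← hd']; push_cast; ring
  have hcore := core m (c := c) (M := M) (D := L + 1) (e0 := e θ₀) (θ := θ₀) (f := f) (G := G)
    (α := fun t => a (t / ε)) (α' := fun s => deriv a (s / ε) * (1 / ε))
    (β := fun t => b (t / ε)) (β' := fun s => deriv b (s / ε) * (1 / ε))
    (u := u) (u' := u') (u'' := deriv u') hk hk1 hc hε hε2 hcf (hep θ₀).le (by linarith)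
    hfm hfl hG hG0
    (fun s hs => ⟨(hcab _ (hbnd s hs)).1, (hM _ (hbnd s hs)).1⟩)
    (fun s hs => ⟨(hcab _ (hbnd s hs)).2, (hM _ (hbnd s hs)).2⟩)
    (fun s _ => (hαd s).continuousAt.continuousWithinAt)
    (fun s _ => (hβd s).continuousAt.continuousWithinAt)
    (huc.mono hsub0) (huc'.mono hsub) (fun s _ => hαd s) (fun s _ => hβd s) hD'
    (fun s hs => (hud s (Ioo_subset_Ioc_self (hsub1 hs))).hasDerivAt
      (Icc_mem_nhds (hsub1 hs).1 (hsub1 hs).2))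
    (fun s hs => (hode' s (hsub1 hs)).1)
    (fun s hs => (hode' s (hsub1 hs)).2)
    (fun s hs => (hpos s (hsub0 hs)).1) (fun s hs => (hpos s (hsub0 hs)).2)
    (by rw [hbc]; exact hea (hpos 1 (by simp)).1)
    hC1 hK hC2 hH s hs
  have hus := hpos s (hsub0 hs)
  have hα0 : 0 < a (s / ε) := hc.trans_le (hcab _ (hbnd s hs)).1
  have hβ0 : 0 < b (s / ε) := hc.trans_le (hcab _ (hbnd s hs)).2
  have hGs := (hG0 _ hus.1).1
  have hfin : |(ε * u' s) ^ 2 - 2 * b (s / ε) / a (s / ε) * G (u s)| ≤ (2 * C3) * ε := by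
    have : (ε * u' s) ^ 2 - 2 * b (s / ε) / a (s / ε) * G (u s) =
      2 * ((ε * u' s) ^ 2 / 2 - b (s / ε) / a (s / ε) * G (u s)) := by ring
    rw [this, abs_mul, abs_two]
    linarith
  have := sqrt_aux (mul_nonneg hε.le hus.2) (by positivity) hfin
  rw [Real.sqrt_mul' _ hε.le] at this
  refine this.trans ?_
  have := Real.sqrt_nonneg ε
  linarith
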